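/- Let F be an algebraically closed field of characteristic ≠ 2, n ≥ 1, u₀ = u², and let σ̃ : F((u)) → F((u)) be the F((u₀))-algebra automorphism with σ̃(u) = −u (applied to matrices entrywise). Let g ∈ GL_n(F((u))) be such that gᵀ·Ĩ_n·σ̃(g) = c·Ĩ_n for some c ∈ F((u₀))^× and such that g·Λ̃_i = Λ̃_i for all i ∈ ℤ. Then c ∈ F[[u₀]]^×, and there exists a scalar x ∈ F[[u₀]]^× such that h = x^{-1}·g satisfies hᵀ·Ĩ_n·σ̃(h) = Ĩ_n and h·Λ̃_i = Λ̃_i for all i ∈ ℤ. In other words, I_GU(F) = F[[u₀]]^×·I_U(F). -/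

import Mathlib

noncomputable section
namespace Pap

variable (R : Type*) [CommRing R]

/-- `u^m` as a Laurent series. -/
def U (m : ℤ) : LaurentSeries R := HahnSeries.single m 1

/-- `R[[u]]` as a `R[[u]]`-submodule of `R((u))`. -/
def psRange : Submodule (PowerSeries R) (LaurentSeries R) :=
  LinearMap.range (Algebra.linearMap (PowerSeries R) (LaurentSeries R))

variable (n : ℕ)

/-- `R((u))^n`. -/
abbrev V := Fin n → LaurentSeries R

instance (priority := 10000) : AddCommGroup (V R n) := Pi.addCommGroup
instance (priority := 10000) : Module (PowerSeries R) (V R n) := Pi.module _ _ _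
instance (priority := 10000) : Module (LaurentSeries R) (V R n) := Pi.module _ _ _

/-- Multiplication by a Laurent series, as an `R[[u]]`-linear endomorphism of `R((u))^n`. -/
def smulV (a : LaurentSeries R) : V R n →ₗ[PowerSeries R] V R n where
  toFun x := a • x
  map_add' x y := smul_add a x y
  map_smul' c x := by
    funext i
    change a * (c • x i) = c • (a * x i)
    simp only [Algebra.smul_def]
    ring

/-- Image of a submodule under multiplication by a Laurent series. -/
def scaleL (a : LaurentSeries R) (L : Submodule (PowerSeries R) (V R n)) :
    Submodule (PowerSeries R) (V R n) := L.map (smulV R n a)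

/-- The standard lattice `R[[u]]^n`. -/
def stdLat : Submodule (PowerSeries R) (V R n) := Submodule.pi Set.univ fun _ => psRange R

/-- The quotient `B/(A ∩ B)`; for `A ≤ B` this is `B/A`. -/
abbrev subQuot (A B : Submodule (PowerSeries R) (V R n)) :=
  B ⧸ (A.comap B.subtype)

/-- A lattice in `R((u))^n`. -/
def IsLattice (L : Submodule (PowerSeries R) (V R n)) : Prop :=
  ∃ N : ℕ, scaleL R n (U R N) (stdLat R n) ≤ L ∧ L ≤ scaleL R n (U R (-(N : ℤ))) (stdLat R n) ∧
    Module.Finite R (RestrictScalars R (PowerSeries R)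
      (subQuot R n L (scaleL R n (U R (-(N : ℤ))) (stdLat R n)))) ∧
    Module.Projective R (RestrictScalars R (PowerSeries R)
      (subQuot R n L (scaleL R n (U R (-(N : ℤ))) (stdLat R n))))

/-- Rank one finite locally free module. -/
def RankOne (A : Type*) [CommRing A] (Q : Type*) [AddCommGroup Q] [Module A Q] : Prop :=
  Module.Finite A Q ∧ Module.Projective A Q ∧
    ∀ (P : Ideal A) [P.IsPrime],
      Module.finrank (Localization P.primeCompl) (LocalizedModule P.primeCompl Q) = 1

/-- Exponent of `u` bounding the `t`-th coordinate of the `j`-th standard lattice. -/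
def dex (j : ℤ) (t : Fin n) : ℤ := (j - ((t : ℤ) + 1)) / n + 1

/-- The standard lattice chain `Λ̃_j`, `j ∈ ℤ`. -/
def stdChain (j : ℤ) : Submodule (PowerSeries R) (V R n) :=
  Submodule.span (PowerSeries R)
    (Set.range fun t : Fin n =>
      (fun s => if s = t then U R (-(dex n j t)) else 0 : V R n))

/-- A complete periodic lattice chain in `R((u))^n`. -/
def IsLatticeChain (L : ℤ → Submodule (PowerSeries R) (V R n)) : Prop :=
  (∀ i, IsLattice R n (L i)) ∧ (∀ i, L i ≤ L (i + 1)) ∧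
    (∀ i, @RankOne R _ (RestrictScalars R (PowerSeries R) (subQuot R n (L i) (L (i + 1)))) _
      (RestrictScalars.module R (PowerSeries R) (subQuot R n (L i) (L (i + 1))))) ∧
    (∀ i, L ((n : ℤ) + i) = scaleL R n (U R (-1)) (L i))

/-- The action of an invertible matrix over `R((u))` on `R[[u]]`-submodules of `R((u))^n`. -/
def glLat (g : GL (Fin n) (LaurentSeries R)) (L : Submodule (PowerSeries R) (V R n)) :
    Submodule (PowerSeries R) (V R n) :=
  L.map ((Matrix.mulVecLin (g : Matrix (Fin n) (Fin n) (LaurentSeries R))).restrictScalars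
    (PowerSeries R))

/-- The antidiagonal matrix `Ĩ_n`. -/
def It : Matrix (Fin n) (Fin n) (LaurentSeries R) :=
  Matrix.of fun i j => if (i : ℕ) + (j : ℕ) = n - 1 then 1 else 0

/-- The image of an `R[[u]]`-submodule of `R((u))^n` under a matrix over `R((u))`. -/
def matLat (x : Matrix (Fin n) (Fin n) (LaurentSeries R))
    (L : Submodule (PowerSeries R) (V R n)) : Submodule (PowerSeries R) (V R n) :=
  L.map ((Matrix.mulVecLin x).restrictScalars (PowerSeries R))

/-- The `F((u²))`-automorphism `σ̃` of `F((u))` with `σ̃(u) = -u`. -/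
def sigmaT (F : Type*) [Field F] (x : LaurentSeries F) : LaurentSeries F where
  coeff k := (-1 : F) ^ k * x.coeff k
  isPWO_support' := x.isPWO_support'.mono (fun g hg => by
    simp only [Function.mem_support] at hg ⊢
    intro h; exact hg (by rw [h, mul_zero]))

end Pap
end

/-!
Comparing an entry equal to `1` on both sides of `gᵀ * Ĩ * σ̃(g) = c • Ĩ` shows that `c` lies in
`F[[u]]` as soon as `g` does, and since `Ĩ` is symmetric, applying `σ̃` to the transposed relation
gives `σ̃(c) = c`. The same applies to `g⁻¹`, whose factor is `c⁻¹`, so `c ∈ F[[u₀]]^×`. By Hensel's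
lemma `c` has a square root `x` in `F[[u]]^×`; from `σ̃(x)² = x²` one gets `σ̃(x) = ± x`, and the
sign is `+` because `σ̃` preserves the nonzero constant term. Hence `x⁻¹ • g` has factor
`x⁻¹ * σ̃(x⁻¹) * c = 1`.
-/

namespace Pap
open Matrix

section Similitude

variable {A ι : Type*} [CommRing A] [Fintype ι] {τ : A →+* A} {J g : Matrix ι ι A} {c : A}

/-- `g` is a similitude with factor `c` of the `τ`-sesquilinear form with Gram matrix `J`. The
groups `GU` and `U` are the cases `J = Ĩ_n`, `τ = σ̃`, with `c` arbitrary and `c = 1`. -/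
def IsSimilitude (τ : A →+* A) (J g : Matrix ι ι A) (c : A) : Prop :=
  gᵀ * J * g.map τ = c • J

theorem IsSimilitude.smul (h : IsSimilitude τ J g c) (a : A) :
    IsSimilitude τ J (a • g) (a * τ a * c) := by
  have hmap : (a • g).map τ = τ a • g.map τ := by
    ext i j
    exact map_mul τ a (g i j)
  unfold IsSimilitude at h ⊢
  rw [hmap, transpose_smul, Matrix.smul_mul, Matrix.smul_mul, Matrix.mul_smul, h, smul_smul,
    smul_smul, mul_assoc]

theorem IsSimilitude.inv [DecidableEq ι] {g : GL ι A} {c : Aˣ} (h : IsSimilitude τ J g.val c) :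
    IsSimilitude τ J g⁻¹.val c⁻¹.val := by
  have hleft : g⁻¹.valᵀ * g.valᵀ = 1 := by
    rw [← transpose_mul, Units.mul_inv, transpose_one]
  have hright : g.val.map τ * g⁻¹.val.map τ = 1 := by
    rw [← Matrix.map_mul, Units.mul_inv, Matrix.map_one _ (map_zero _) (map_one _)]
  have hJ : J = c⁻¹.val • (g.valᵀ * J * g.val.map τ) := by
    rw [h, smul_smul, Units.inv_mul, one_smul]
  calc g⁻¹.valᵀ * J * g⁻¹.val.map τ
      = c⁻¹.val • ((g⁻¹.valᵀ * g.valᵀ) * J * (g.val.map τ * g⁻¹.val.map τ)) := by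
        conv_lhs => rw [hJ]
        simp only [Matrix.mul_smul, Matrix.smul_mul, Matrix.mul_assoc]
    _ = c⁻¹.val • J := by rw [hleft, hright, Matrix.one_mul, Matrix.mul_one]

theorem IsSimilitude.map_factor (h : IsSimilitude τ J g c) (hτ : Function.Involutive τ)
    (hsymm : J.IsSymm) (hmap : J.map τ = J) {i j : ι} (hij : J i j = 1) : τ c = c := by
  have hττ : (g.map τ).map τ = g := by
    ext k l
    exact hτ (g k l)
  have hτc : τ c • J = c • J :=
    calc τ c • J = (c • J).map τ := by
          ext k l
          exact (congrArg (τ c * ·) (congrFun₂ hmap k l).symm).trans (map_mul τ c (J k l)).symm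
      _ = ((gᵀ * J * g.map τ)ᵀ).map τ := by rw [h, transpose_smul, hsymm.eq]
      _ = gᵀ * J * g.map τ := by
          rw [transpose_mul, transpose_mul, transpose_transpose, hsymm.eq, Matrix.map_mul,
            Matrix.map_mul, hmap, transpose_map, hττ, Matrix.mul_assoc]
      _ = c • J := h
  simpa only [Matrix.smul_apply, hij, smul_eq_mul, mul_one] using congrFun₂ hτc i j

theorem IsSimilitude.factor_mem [DecidableEq ι] (h : IsSimilitude τ J g c) {S : Subring A}
    (hτ : ∀ a ∈ S, τ a ∈ S) (hJ : J ∈ S.matrix) (hg : g ∈ S.matrix) {i j : ι}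
    (hij : J i j = 1) : c ∈ S := by
  have hcJ : c • J ∈ S.matrix :=
    h ▸ mul_mem (mul_mem (fun k l => hg l k) hJ) fun k l => hτ _ (hg k l)
  have hcJ_entry : (c • J) i j ∈ S := hcJ i j
  rwa [Matrix.smul_apply, hij, smul_eq_mul, mul_one] at hcJ_entry

end Similitude

section PowerSeries

variable {R : Type*} [CommRing R]

theorem isSquare_powerSeries_of_isSquare_constantCoeff (h2 : IsUnit (2 : R)) {p : PowerSeries R}
    (hunit : IsUnit (PowerSeries.constantCoeff p))
    (hsq : IsSquare (PowerSeries.constantCoeff p)) : IsSquare p := by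
  obtain ⟨z, hz⟩ := hsq
  have hz_unit : IsUnit z := isUnit_of_mul_isUnit_left (hz ▸ hunit)
  obtain ⟨q, hq, -⟩ := HenselianRing.is_henselian
    (I := Ideal.span {(PowerSeries.X : PowerSeries R)}) (Polynomial.X ^ 2 - Polynomial.C p)
    (Polynomial.monic_X_pow_sub_C p two_ne_zero) (PowerSeries.C z)
    (by
      rw [Ideal.mem_span_singleton, PowerSeries.X_dvd_iff]
      simp [hz, sq])
    (by
      refine IsUnit.map _ ?_
      rw [PowerSeries.isUnit_iff_constantCoeff]
      simpa [← one_add_one_eq_two] using h2.mul hz_unit)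
  refine ⟨q, ?_⟩
  have hroot : q ^ 2 - p = 0 := by simpa [Polynomial.IsRoot] using hq
  rw [← sq, sub_eq_zero.1 hroot]

theorem mem_psRange_iff {x : LaurentSeries R} :
    x ∈ psRange R ↔ ∀ k < 0, x.coeff k = 0 := by
  constructor
  · rintro ⟨p, rfl⟩ k hk
    exact (PowerSeries.coeff_coe p k).trans (if_pos hk)
  · intro h
    refine ⟨PowerSeries.mk fun m => x.coeff m, ?_⟩
    ext k
    refine (PowerSeries.coeff_coe _ k).trans ?_
    split_ifs with hk
    · exact (h k hk).symm
    · rw [PowerSeries.coeff_mk, Int.natAbs_of_nonneg (not_lt.1 hk)]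

theorem coeff_zero_algebraMap (p : PowerSeries R) :
    (algebraMap (PowerSeries R) (LaurentSeries R) p).coeff 0 = PowerSeries.constantCoeff p := by
  simpa using PowerSeries.coeff_coe p 0

end PowerSeries

section Lattice

variable {R : Type*} [CommRing R] {n : ℕ}

theorem dex_zero (t : Fin n) : dex n 0 t = 0 := by
  have hdiv : (0 - ((t : ℤ) + 1)) / (n : ℤ) = -1 := by
    rw [Int.ediv_eq_iff_of_pos (Nat.cast_pos.2 t.pos)]
    constructor <;> linarith [Nat.cast_lt (α := ℤ).2 t.isLt, Int.natCast_nonneg (t : ℕ)]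
  rw [dex, hdiv, neg_add_cancel]

theorem single_one_mem_stdLat (t : Fin n) : (Pi.single t 1 : V R n) ∈ stdLat R n := by
  intro s _
  rw [Pi.single_apply]
  split_ifs
  exacts [⟨1, map_one (algebraMap (PowerSeries R) (LaurentSeries R))⟩, Submodule.zero_mem _]

theorem stdChain_zero : stdChain R n 0 = stdLat R n := by
  have hgen : (fun t : Fin n => (fun s => if s = t then U R (-(dex n 0 t)) else 0 : V R n)) =
      fun t => Pi.single t 1 := by
    ext1 t
    ext1 s
    rw [dex_zero, neg_zero, Pi.single_apply]
    rfl
  rw [stdChain, hgen]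
  apply le_antisymm
  · rw [Submodule.span_le]
    rintro _ ⟨t, rfl⟩
    exact single_one_mem_stdLat t
  · intro v hv
    rw [← Finset.univ_sum_single v]
    refine Submodule.sum_mem _ fun t _ => ?_
    obtain ⟨p, hp⟩ := hv t trivial
    have hsingle : (Pi.single t (v t) : V R n) = p • Pi.single t 1 := by
      rw [← Pi.single_smul, ← hp, Algebra.smul_def, mul_one, Algebra.linearMap_apply]
    rw [hsingle]
    exact Submodule.smul_mem _ p (Submodule.subset_span ⟨t, rfl⟩)

theorem mem_matrix_of_matLat_stdLat_le {M : Matrix (Fin n) (Fin n) (LaurentSeries R)}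
    (h : matLat R n M (stdLat R n) ≤ stdLat R n) :
    M ∈ (algebraMap (PowerSeries R) (LaurentSeries R)).range.matrix := by
  intro i j
  have hcol : M *ᵥ Pi.single j 1 ∈ stdLat R n := h ⟨_, single_one_mem_stdLat j, rfl⟩
  rw [mulVec_single_one] at hcol
  exact hcol i trivial

theorem matLat_inv_eq_of_matLat_eq {g : GL (Fin n) (LaurentSeries R)}
    {L : Submodule (PowerSeries R) (V R n)} (h : matLat R n g.val L = L) :
    matLat R n g⁻¹.val L = L := by
  conv_lhs => rw [← h]
  rw [matLat, matLat, ← Submodule.map_comp]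
  have hid : ((mulVecLin g⁻¹.val).restrictScalars (PowerSeries R)).comp
      ((mulVecLin g.val).restrictScalars (PowerSeries R)) = LinearMap.id := by
    refine LinearMap.ext fun v => ?_
    change g⁻¹.val *ᵥ (g.val *ᵥ v) = v
    rw [mulVec_mulVec, Units.inv_mul, one_mulVec]
  rw [hid, Submodule.map_id]

theorem matLat_smul_le (M : Matrix (Fin n) (Fin n) (LaurentSeries R)) {a : LaurentSeries R}
    (ha : a ∈ psRange R) (L : Submodule (PowerSeries R) (V R n)) :
    matLat R n (a • M) L ≤ matLat R n M L := by
  obtain ⟨p, rfl⟩ := ha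
  rintro _ ⟨v, hv, rfl⟩
  refine ⟨p • v, L.smul_mem p hv, ?_⟩
  rw [map_smul]
  change p • (M *ᵥ v) = (algebraMap (PowerSeries R) (LaurentSeries R) p • M) *ᵥ v
  rw [smul_mulVec, algebraMap_smul]

theorem matLat_units_smul (M : Matrix (Fin n) (Fin n) (LaurentSeries R)) {a : (LaurentSeries R)ˣ}
    (ha : a.val ∈ psRange R) (ha_inv : a⁻¹.val ∈ psRange R)
    (L : Submodule (PowerSeries R) (V R n)) : matLat R n (a.val • M) L = matLat R n M L := by
  refine le_antisymm (matLat_smul_le M ha L) ?_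
  simpa only [smul_smul, Units.inv_mul, one_smul] using matLat_smul_le (a.val • M) ha_inv L

end Lattice

section AntidiagonalForm

variable {R : Type*} [CommRing R] {n : ℕ}

theorem It_isSymm : (It R n).IsSymm := by
  ext i j
  simp only [transpose_apply, It, of_apply, add_comm]

theorem It_map (τ : LaurentSeries R →+* LaurentSeries R) : (It R n).map τ = It R n := by
  ext1 i j
  simp only [map_apply, It, of_apply, apply_ite τ, map_one, map_zero]

theorem It_mem_matrix (S : Subring (LaurentSeries R)) : It R n ∈ S.matrix := by
  intro i j
  simp only [It, of_apply]
  split_ifs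
  exacts [S.one_mem, S.zero_mem]

theorem It_zero_last (hn : 0 < n) : It R n ⟨0, hn⟩ ⟨n - 1, Nat.sub_one_lt_of_lt hn⟩ = 1 :=
  if_pos (zero_add _)

end AntidiagonalForm

section Conjugation

variable {F : Type*} [Field F]

theorem support_sigmaT (x : LaurentSeries F) : (sigmaT F x).support = x.support := by
  ext k
  exact mul_ne_zero_iff_left (zpow_ne_zero k (neg_ne_zero.2 one_ne_zero))

variable (F) in
/-- The conjugation `σ̃` as a ring endomorphism of `F((u))`. -/
def sigma : LaurentSeries F →+* LaurentSeries F where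
  toFun := sigmaT F
  map_one' := by
    ext k
    change (-1 : F) ^ k * (1 : LaurentSeries F).coeff k = (1 : LaurentSeries F).coeff k
    rcases eq_or_ne k 0 with rfl | hk
    · rw [zpow_zero, one_mul]
    · rw [HahnSeries.coeff_one, if_neg hk, mul_zero]
  map_zero' := by
    ext k
    exact mul_zero _
  map_add' x y := by
    ext k
    exact mul_add _ _ _
  map_mul' x y := by
    ext k
    change (-1 : F) ^ k * (x * y).coeff k = (sigmaT F x * sigmaT F y).coeff k
    simp only [HahnSeries.coeff_mul, support_sigmaT, Finset.mul_sum]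
    refine Finset.sum_congr rfl fun ⟨a, b⟩ hab => ?_
    obtain ⟨-, -, hk⟩ := Finset.mem_antidiagonal.1 hab
    change (-1 : F) ^ k * (x.coeff a * y.coeff b) =
      (-1 : F) ^ a * x.coeff a * ((-1 : F) ^ b * y.coeff b)
    rw [← hk, zpow_add₀ (neg_ne_zero.2 one_ne_zero), mul_mul_mul_comm]

theorem coeff_sigma (x : LaurentSeries F) (k : ℤ) :
    (sigma F x).coeff k = (-1) ^ k * x.coeff k := rfl

theorem sigma_involutive : Function.Involutive (sigma F) := by
  intro x
  ext k
  rw [coeff_sigma, coeff_sigma, ← mul_assoc, ← mul_zpow, neg_one_mul, neg_neg,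
    _root_.one_zpow, one_mul]

theorem sigma_mem_psRange {x : LaurentSeries F} (hx : x ∈ psRange F) :
    sigma F x ∈ psRange F := by
  rw [mem_psRange_iff] at hx ⊢
  intro k hk
  rw [coeff_sigma, hx k hk, mul_zero]

theorem sigma_eq_self_iff (h2 : (2 : F) ≠ 0) {x : LaurentSeries F} :
    sigma F x = x ↔ ∀ k : ℤ, Odd k → x.coeff k = 0 := by
  constructor
  · intro h k hk
    have hneg : -x.coeff k = x.coeff k := by
      simpa only [coeff_sigma, hk.neg_one_zpow, neg_one_mul] using congrArg (·.coeff k) h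
    have htwo : 2 * x.coeff k = 0 := by linear_combination -hneg
    exact (mul_eq_zero.1 htwo).resolve_left h2
  · intro h
    ext k
    rcases Int.even_or_odd k with hk | hk
    · rw [coeff_sigma, hk.neg_one_zpow, one_mul]
    · rw [coeff_sigma, h k hk, mul_zero]

theorem sigma_eq_self_of_mul_self (h2 : (2 : F) ≠ 0) {x : LaurentSeries F} (hx : x.coeff 0 ≠ 0)
    (h : sigma F (x * x) = x * x) : sigma F x = x := by
  rw [map_mul] at h
  refine (mul_self_eq_mul_self_iff.1 h).resolve_right fun hneg => ?_
  have hcoeff : x.coeff 0 = -x.coeff 0 := by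
    simpa only [coeff_sigma, zpow_zero, one_mul, HahnSeries.coeff_neg] using
      congrArg (·.coeff 0) hneg
  have htwo : 2 * x.coeff 0 = 0 := by linear_combination hcoeff
  exact mul_ne_zero h2 hx htwo

variable (F) in
/-- The ring `F[[u₀]]`, `u₀ = u²`, inside `F((u))`, encoded as the `σ̃`-fixed elements of `F[[u]]`;
in characteristic `2`, where `σ̃` is the identity, it is all of `F[[u]]`. -/
noncomputable def evenPowerSeries : Subring (LaurentSeries F) :=
  (algebraMap (PowerSeries F) (LaurentSeries F)).range ⊓ (sigma F).eqLocus (RingHom.id _)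

theorem mem_evenPowerSeries_iff (h2 : (2 : F) ≠ 0) {x : LaurentSeries F} :
    x ∈ evenPowerSeries F ↔ x ∈ psRange F ∧ ∀ k : ℤ, Odd k → x.coeff k = 0 :=
  and_congr_right' (sigma_eq_self_iff h2)

theorem mem_units_evenPowerSeries_iff (h2 : (2 : F) ≠ 0) {x : (LaurentSeries F)ˣ} :
    x ∈ (evenPowerSeries F).units ↔
      x.val ∈ psRange F ∧ (∀ k : ℤ, Odd k → x.val.coeff k = 0) ∧
        x⁻¹.val ∈ psRange F ∧ ∀ k : ℤ, Odd k → x⁻¹.val.coeff k = 0 := by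
  rw [Submonoid.mem_units_iff, Subring.mem_toSubmonoid, Subring.mem_toSubmonoid,
    mem_evenPowerSeries_iff h2, mem_evenPowerSeries_iff h2, and_assoc]

theorem exists_mem_units_evenPowerSeries_mul_self (h2 : (2 : F) ≠ 0) {c : (LaurentSeries F)ˣ}
    (hc : c ∈ (evenPowerSeries F).units) (hsq : IsSquare (c.val.coeff 0)) :
    ∃ x ∈ (evenPowerSeries F).units, x * x = c := by
  obtain ⟨p, hp⟩ : c.val ∈ (algebraMap (PowerSeries F) (LaurentSeries F)).range := hc.1.1
  obtain ⟨q, hq⟩ : c⁻¹.val ∈ (algebraMap (PowerSeries F) (LaurentSeries F)).range := hc.2.1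
  have hpq : p * q = 1 := by
    refine HahnSeries.ofPowerSeries_injective (Γ := ℤ) (R := F) ?_
    change algebraMap (PowerSeries F) (LaurentSeries F) (p * q) = algebraMap _ _ 1
    rw [map_mul, hp, hq, Units.mul_inv, map_one]
  rw [← hp, coeff_zero_algebraMap] at hsq
  have hp_unit := (IsUnit.of_mul_eq_one q hpq).map (PowerSeries.constantCoeff (R := F))
  obtain ⟨r, rfl⟩ := isSquare_powerSeries_of_isSquare_constantCoeff h2.isUnit hp_unit hsq
  rw [map_mul] at hp
  have hr : (algebraMap (PowerSeries F) (LaurentSeries F) r).coeff 0 ≠ 0 := by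
    rw [coeff_zero_algebraMap]
    rw [map_mul] at hp_unit
    exact left_ne_zero_of_mul hp_unit.ne_zero
  have hfix : sigma F (algebraMap _ _ r) = algebraMap _ _ r :=
    sigma_eq_self_of_mul_self h2 hr (hp ▸ hc.1.2)
  have hr_mem : algebraMap _ _ r ∈ evenPowerSeries F := ⟨⟨r, rfl⟩, hfix⟩
  have hr_inv : algebraMap _ _ r * (algebraMap _ _ r * c⁻¹.val) = 1 := by
    rw [← mul_assoc, hp, Units.mul_inv]
  exact ⟨⟨algebraMap _ _ r, algebraMap _ _ r * c⁻¹.val, hr_inv, (mul_comm _ _).trans hr_inv⟩,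
    ⟨hr_mem, mul_mem hr_mem hc.2⟩, Units.ext hp⟩

end Conjugation

theorem IsSimilitude.factor_mem_evenPowerSeries {F : Type*} [Field F] {n : ℕ} (hn : 0 < n)
    {g : Matrix (Fin n) (Fin n) (LaurentSeries F)} {c : LaurentSeries F}
    (h : IsSimilitude (sigma F) (It F n) g c)
    (hg : matLat F n g (stdLat F n) ≤ stdLat F n) : c ∈ evenPowerSeries F :=
  ⟨h.factor_mem (fun _ => sigma_mem_psRange) (It_mem_matrix _)
      (mem_matrix_of_matLat_stdLat_le hg) (It_zero_last hn),
    h.map_factor sigma_involutive It_isSymm (It_map _) (It_zero_last hn)⟩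

end Pap

open Pap in
theorem stmt10_general {F : Type*} [Field F] (h2 : (2 : F) ≠ 0) {n : ℕ} (hn : 0 < n)
    {g : GL (Fin n) (LaurentSeries F)} {c : (LaurentSeries F)ˣ}
    (hsq : IsSquare (c.val.coeff 0)) (hg : IsSimilitude (sigma F) (It F n) g.val c)
    (hstab : glLat F n g (stdLat F n) = stdLat F n) :
    c ∈ (evenPowerSeries F).units ∧
      ∃ x ∈ (evenPowerSeries F).units,
        IsSimilitude (sigma F) (It F n) (x⁻¹.val • g.val) 1 ∧
          ∀ L, matLat F n (x⁻¹.val • g.val) L = glLat F n g L := by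
  have hc : c ∈ (evenPowerSeries F).units :=
    ⟨hg.factor_mem_evenPowerSeries hn hstab.le,
      hg.inv.factor_mem_evenPowerSeries hn (matLat_inv_eq_of_matLat_eq hstab).le⟩
  obtain ⟨x, hx, hxc⟩ := exists_mem_units_evenPowerSeries_mul_self h2 hc hsq
  have hfactor : x⁻¹.val * sigma F x⁻¹.val * c.val = 1 := by
    rw [show sigma F x⁻¹.val = x⁻¹.val from hx.2.2, ← hxc, Units.val_mul,
      mul_mul_mul_comm, Units.inv_mul, one_mul]
  exact ⟨hc, x, hx, hfactor ▸ hg.smul x⁻¹.val,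
    matLat_units_smul g.val hx.2.1 ((inv_inv x).symm ▸ hx.1.1)⟩

open Pap Matrix in
/-- `I_GU(F) = F[[u₀]]^× · I_U(F)` for the ramified unitary group (`u₀ = u²`). -/
theorem stmt10 (F : Type*) [Field F] [IsAlgClosed F] (hchar : (2 : F) ≠ 0)
    (n : ℕ) (hn : 1 ≤ n) (g : GL (Fin n) (LaurentSeries F)) (c : (LaurentSeries F)ˣ)
    (hceven : ∀ k : ℤ, Odd k → (c : LaurentSeries F).coeff k = 0)
    (hc : (g : Matrix (Fin n) (Fin n) (LaurentSeries F))ᵀ * It F n *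
        ((g : Matrix (Fin n) (Fin n) (LaurentSeries F)).map (sigmaT F))
      = (c : LaurentSeries F) • It F n)
    (hstab : ∀ i : ℤ, glLat F n g (stdChain F n i) = stdChain F n i) :
    ((c : LaurentSeries F) ∈ psRange F ∧
      ((c⁻¹ : (LaurentSeries F)ˣ) : LaurentSeries F) ∈ psRange F ∧
      ∀ k : ℤ, Odd k → ((c⁻¹ : (LaurentSeries F)ˣ) : LaurentSeries F).coeff k = 0) ∧
    ∃ x : (LaurentSeries F)ˣ,
      ((x : LaurentSeries F) ∈ psRange F ∧
        (∀ k : ℤ, Odd k → (x : LaurentSeries F).coeff k = 0) ∧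
        ((x⁻¹ : (LaurentSeries F)ˣ) : LaurentSeries F) ∈ psRange F ∧
        (∀ k : ℤ, Odd k → ((x⁻¹ : (LaurentSeries F)ˣ) : LaurentSeries F).coeff k = 0)) ∧
      (((x⁻¹ : (LaurentSeries F)ˣ) : LaurentSeries F) •
            (g : Matrix (Fin n) (Fin n) (LaurentSeries F)))ᵀ * It F n *
          ((((x⁻¹ : (LaurentSeries F)ˣ) : LaurentSeries F) •
            (g : Matrix (Fin n) (Fin n) (LaurentSeries F))).map (sigmaT F))
        = It F n ∧
      ∀ i : ℤ,
        matLat F n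
          (((x⁻¹ : (LaurentSeries F)ˣ) : LaurentSeries F) •
            (g : Matrix (Fin n) (Fin n) (LaurentSeries F)))
          (stdChain F n i) = stdChain F n i := by
  obtain ⟨hc_mem, x, hx, hxg, hL⟩ := stmt10_general hchar hn
    (IsAlgClosed.exists_eq_mul_self _) hc (stdChain_zero (R := F) ▸ hstab 0)
  rw [mem_units_evenPowerSeries_iff hchar] at hc_mem hx
  exact ⟨⟨hc_mem.1, hc_mem.2.2⟩, x, hx, hxg.trans (one_smul _ _), fun i => (hL _).trans (hstab i)⟩
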